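/- arXiv:2602.20625 — 8 statements merged into one kernel-verified Lean document; each statement's English description precedes it below -/
import Mathlib

section
/- Let k ≥ 1 be a fixed integer. In the ring of formal power series in x over the polynomial ring ℤ[y], let F = Σ_{n≥0} (Σ_{m∈P(n)} y^{B(m)}) x^n. Then F · (1 − Σ_{j≥1} w_j x^j) = 1, where w_j = y if j ∈ Ev_{>k} and w_j = 1 otherwise; equivalently, F · (1 − Σ_{j≥1} x^j − (y−1)·Σ_{j∈Ev_{>k}} x^j) = 1. -/
open PowerSeries

/-- The number of parts of a composition that are even and strictly greater than `k`. -/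
def Bstat (k : ℕ) {n : ℕ} (m : Composition n) : ℕ :=
  m.blocks.countP fun j => decide (Even j ∧ k < j)

/-- The bivariate generating function `F(x,y) = Σ_n (Σ_{m ∈ P(n)} y^{B(m)}) x^n`,
viewed as a power series in `x` over `ℤ[y]`. -/
noncomputable def Fgen (k : ℕ) : PowerSeries (Polynomial ℤ) :=
  PowerSeries.mk fun n => ∑ m : Composition n, (Polynomial.X : Polynomial ℤ) ^ Bstat k m

/-- `Σ_{j ≥ 1} w_j x^j` where `w_j = y` if `j` is even and `> k`, and `w_j = 1` otherwise. -/
noncomputable def Wgen (k : ℕ) : PowerSeries (Polynomial ℤ) :=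
  PowerSeries.mk fun j =>
    if j = 0 then 0 else if Even j ∧ k < j then Polynomial.X else 1

/-- `Σ_{j ≥ 1} x^j`. -/
noncomputable def Ugen : PowerSeries (Polynomial ℤ) :=
  PowerSeries.mk fun j => if j = 0 then 0 else 1

/-- `Σ_{j ∈ Ev_{>k}} x^j`. -/
noncomputable def Egen (k : ℕ) : PowerSeries (Polynomial ℤ) :=
  PowerSeries.mk fun j => if Even j ∧ k < j then 1 else 0

def consComp (n : ℕ) (p : Σ i : Fin (n + 1), Composition (i : ℕ)) : Composition (n + 1) where
  blocks := (n + 1 - (p.1 : ℕ)) :: p.2.blocks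
  blocks_pos := by
    intro j hj
    rcases List.mem_cons.1 hj with h | h
    · have := p.1.2
      omega
    · exact p.2.blocks_pos h
  blocks_sum := by
    have := p.1.2
    rw [List.sum_cons, p.2.blocks_sum]
    omega

theorem consComp_bij (n : ℕ) : Function.Bijective (consComp n) := by
  constructor
  · rintro ⟨⟨i, hi⟩, c⟩ ⟨⟨j, hj⟩, d⟩ h
    have h2 := congrArg Composition.blocks h
    simp only [consComp, List.cons.injEq] at h2
    obtain ⟨h3, h4⟩ := h2
    have : i = j := by omega
    subst this
    have : c = d := Composition.ext h4
    rw [this]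
  · intro c
    rcases hb : c.blocks with _ | ⟨a, l⟩
    · have := c.blocks_sum
      simp [hb] at this
    · have hs := c.blocks_sum
      have ha : 0 < a := c.blocks_pos (by simp [hb])
      rw [hb, List.sum_cons] at hs
      refine ⟨⟨⟨l.sum, by omega⟩, ⟨l, fun {i} hi => c.blocks_pos (by simp [hb, hi]), rfl⟩⟩, ?_⟩
      apply Composition.ext
      simp only [consComp, hb]
      congr 1
      omega

theorem Bstat_cons (k n : ℕ) (p : Σ i : Fin (n + 1), Composition (i : ℕ)) :
    (Polynomial.X : Polynomial ℤ) ^ Bstat k (consComp n p) =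
      Polynomial.X ^ Bstat k p.2 *
        (if Even (n + 1 - (p.1 : ℕ)) ∧ k < n + 1 - (p.1 : ℕ) then Polynomial.X else 1) := by
  simp only [Bstat, consComp, List.countP_cons, decide_eq_true_eq]
  split_ifs
  · rw [pow_succ]
  · simp

theorem Fgen_mul_Wgen (k : ℕ) : Fgen k * Wgen k = Fgen k - 1 := by
  ext1 n
  rw [PowerSeries.coeff_mul, map_sub, PowerSeries.coeff_one,
    Finset.Nat.sum_antidiagonal_eq_sum_range_succ_mk]
  rcases n with _ | n
  · have : ∀ m : Composition 0, Bstat k m = 0 := by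
      intro m
      have : m.blocks = [] := (Composition.blocks_eq_nil m).2 rfl
      simp [Bstat, this]
    simp [Fgen, Wgen, this, composition_card]
  · rw [Finset.sum_range_succ]
    simp only [Fgen, Wgen, PowerSeries.coeff_mk]
    rw [← (consComp_bij n).sum_comp, Fintype.sum_sigma, Finset.sum_range]
    simp only [Bstat_cons]
    simp only [Nat.sub_self, if_true, mul_zero, add_zero, Nat.succ_ne_zero, if_false, sub_zero]
    refine Finset.sum_congr rfl fun i _ => ?_
    have : n + 1 - (i : ℕ) ≠ 0 := by have := i.2; omega
    rw [if_neg this, Finset.sum_mul]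

theorem stmt0 (k : ℕ) (hk : 1 ≤ k) :
    Fgen k * (1 - Wgen k) = 1 ∧
    Fgen k * (1 - Ugen - PowerSeries.C (R := Polynomial ℤ) (Polynomial.X - 1) * Egen k) = 1 := by
  have h1 : Fgen k * (1 - Wgen k) = 1 := by
    rw [mul_sub, Fgen_mul_Wgen]; ring
  have h2 : Wgen k = Ugen + PowerSeries.C (R := Polynomial ℤ) (Polynomial.X - 1) * Egen k := by
    ext1 j
    rw [map_add, PowerSeries.coeff_C_mul]
    simp only [Wgen, Ugen, Egen, PowerSeries.coeff_mk]
    by_cases hj : j = 0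
    · subst hj; simp
    · simp only [hj, if_false]
      split_ifs <;> ring
  refine ⟨h1, ?_⟩
  rw [sub_sub, ← h2]
  exact h1
end

section
/- Let k ≥ 1 be a fixed integer and set δ = 1 if k is odd and δ = 2 if k is even. For n ≥ 0 let c_k(n) denote the number of compositions m of n with B(m) = 0, i.e. compositions of n having no even part strictly greater than k. Then in ℤ[[x]]: ((1 − 2x)(1 − x²) + (1 − x)·x^{k+δ}) · Σ_{n≥0} c_k(n)·x^n = (1 − x)(1 − x²). -/
open PowerSeries

/-- `c k n` is the number of compositions of `n` having no even part strictly
greater than `k`. -/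
def cComp (k n : ℕ) : ℕ :=
  (Finset.univ.filter fun m : Composition n => Bstat k m = 0).card

def SL (k n : ℕ) : Finset (List ℕ) :=
  (Finset.univ.filter fun m : Composition n => Bstat k m = 0).image Composition.blocks

theorem SL_card (k n : ℕ) : (SL k n).card = cComp k n := by
  unfold SL cComp
  apply Finset.card_image_of_injective
  intro a b h
  exact Composition.ext h

theorem mem_SL (k n : ℕ) (l : List ℕ) :
    l ∈ SL k n ↔ l.sum = n ∧ ∀ j ∈ l, 0 < j ∧ ¬ (Even j ∧ k < j) := by
  unfold SL
  simp only [Finset.mem_image, Finset.mem_filter, Finset.mem_univ, true_and, Bstat,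
    List.countP_eq_zero, decide_eq_true_eq]
  constructor
  · rintro ⟨m, h, rfl⟩
    exact ⟨m.blocks_sum, fun j hj => ⟨m.blocks_pos hj, h j hj⟩⟩
  · rintro ⟨h1, h2⟩
    exact ⟨⟨l, fun {i} hi => (h2 i hi).1, h1⟩, fun j hj => (h2 j hj).2, rfl⟩

theorem SL_zero (k : ℕ) : SL k 0 = {[]} := by
  ext l
  rw [mem_SL]
  cases l with
  | nil => simp
  | cons a t =>
    simp only [List.sum_cons, List.mem_cons, Finset.mem_singleton]
    constructor
    · rintro ⟨h1, h2⟩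
      have := (h2 a (Or.inl rfl)).1
      omega
    · intro h
      simp at h

theorem SL_succ (k n : ℕ) : SL k (n+1) =
    ((Finset.HasAntidiagonal.antidiagonal n).filter fun p => ¬ (Even (p.1+1) ∧ k < p.1+1)).biUnion
      fun p => (SL k p.2).image (List.cons (p.1+1)) := by
  ext l
  simp only [Finset.mem_biUnion, Finset.mem_filter, Finset.HasAntidiagonal.mem_antidiagonal, Finset.mem_image,
    mem_SL]
  constructor
  · rintro ⟨h1, h2⟩
    cases l with
    | nil => simp at h1
    | cons a t =>
      have ha := h2 a (by simp)
      obtain ⟨b, rfl⟩ : ∃ b, a = b + 1 := ⟨a - 1, by omega⟩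
      simp only [List.sum_cons] at h1
      exact ⟨(b, t.sum), ⟨by simp only; omega, ha.2⟩, t,
        ⟨rfl, fun j hj => h2 j (List.mem_cons_of_mem _ hj)⟩, rfl⟩
  · rintro ⟨⟨a, b⟩, ⟨h1, h2⟩, t, ⟨h3, h4⟩, rfl⟩
    simp only at h1 h2 h3
    refine ⟨by simp only [List.sum_cons]; omega, ?_⟩
    intro j hj
    rcases List.mem_cons.1 hj with rfl | hj
    · exact ⟨by omega, h2⟩
    · exact h4 j hj

theorem cComp_zero (k : ℕ) : cComp k 0 = 1 := by
  rw [← SL_card, SL_zero]; rfl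

theorem cComp_succ (k n : ℕ) : cComp k (n+1) =
    ∑ p ∈ Finset.HasAntidiagonal.antidiagonal n, (if Even (p.1+1) ∧ k < p.1+1 then 0 else 1) * cComp k p.2 := by
  rw [← SL_card, SL_succ, Finset.card_biUnion, Finset.sum_filter]
  · apply Finset.sum_congr rfl
    intro p _
    rw [Finset.card_image_of_injective _ List.cons_injective, SL_card]
    split_ifs <;> simp_all
  · intro p hp q hq hpq
    rw [Function.onFun, Finset.disjoint_left]
    intro l hl hl'
    simp only [Finset.mem_image, Finset.coe_filter, Set.mem_setOf_eq, Finset.HasAntidiagonal.mem_antidiagonal] at *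
    obtain ⟨t, _, rfl⟩ := hl
    obtain ⟨s, _, h⟩ := hl'
    have := (List.cons.inj h).1
    apply hpq
    ext <;> omega

theorem stmt4 (k : ℕ) (hk : 1 ≤ k) (δ : ℕ) (hδ : δ = if Odd k then 1 else 2) :
    ((1 - 2 * PowerSeries.X) * (1 - PowerSeries.X ^ 2)
        + (1 - PowerSeries.X) * PowerSeries.X ^ (k + δ))
      * PowerSeries.mk (fun n => (cComp k n : ℤ))
      = (1 - PowerSeries.X) * (1 - PowerSeries.X ^ 2) := by
  set C : PowerSeries ℤ := PowerSeries.mk (fun n => (cComp k n : ℤ)) with hC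
  let V : PowerSeries ℤ := PowerSeries.mk (fun n => if Even n ∧ k < n then 1 else 0)
  let U : PowerSeries ℤ := PowerSeries.mk (fun n => if n = 0 then 0 else 1)
  have hU : (1 - X) * U = X := by
    ext n
    rw [sub_mul, one_mul, map_sub, ← pow_one (X : PowerSeries ℤ), coeff_X_pow_mul', coeff_X_pow]
    simp only [U, coeff_mk]
    split_ifs <;> omega
  have hV : (1 - X ^ 2) * V = X ^ (k + δ) := by
    ext n
    rw [sub_mul, one_mul, map_sub, coeff_X_pow_mul', coeff_X_pow]
    simp only [V, coeff_mk, Nat.even_iff, Nat.odd_iff] at hδ ⊢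
    split_ifs at hδ ⊢ <;> omega
  have hr : C = 1 + (U - V) * C := by
    ext n
    cases n with
    | zero => simp [hC, U, V, cComp_zero]
    | succ n =>
      rw [map_add, coeff_mul, Finset.Nat.sum_antidiagonal_succ]
      simp only [hC, U, V, coeff_mk, cComp_succ, map_sub, coeff_one]
      push_cast
      simp only [Nat.not_lt_zero, and_false, if_true, if_false, sub_zero, zero_mul, zero_add,
        Nat.add_eq_zero_iff, one_ne_zero]
      apply Finset.sum_congr rfl
      intro p _
      split_ifs <;> simp
  linear_combination (1 - X) * (1 - X ^ 2) * hr + C * (1 - X ^ 2) * hU - C * (1 - X) * hV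
end

section
/- Let k ≥ 1 be a fixed integer and set δ = 1 if k is odd and δ = 2 if k is even. Then in ℤ[[x]]: ((1 − 2x)(1 − x²) + 2(1 − x)·x^{k+δ}) · Σ_{n≥0} (Σ_{m∈P(n)} (−1)^{B(m)})·x^n = (1 − x)(1 − x²). -/
open PowerSeries

/-- The sign weight of a part. -/
def wt8 (k j : ℕ) : ℤ := if Even j ∧ k < j then -1 else 1

/-- Prepend a part. -/
def cons8 (n : ℕ) (p : Σ i : Fin (n + 1), Composition (n - i)) : Composition (n + 1) where
  blocks := (p.1 + 1 : ℕ) :: p.2.blocks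
  blocks_pos := by
    intro i hi
    rcases List.mem_cons.1 hi with h | h
    · omega
    · exact p.2.blocks_pos h
  blocks_sum := by
    have := p.1.2
    rw [List.sum_cons, p.2.blocks_sum]; omega

lemma cons8_bij (n : ℕ) : Function.Bijective (cons8 n) := by
  constructor
  · rintro ⟨i, c⟩ ⟨j, d⟩ h
    have h' := congrArg Composition.blocks h
    simp only [cons8, List.cons.injEq] at h'
    obtain ⟨h1, h2⟩ := h'
    obtain rfl : i = j := by ext; omega
    obtain rfl : c = d := Composition.ext h2
    rfl
  · intro c
    rcases hb : c.blocks with _ | ⟨a, l⟩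
    · have := c.blocks_sum
      rw [hb] at this; simp at this
    · have hs := c.blocks_sum
      have hp : 0 < a := c.blocks_pos (by rw [hb]; simp)
      rw [hb, List.sum_cons] at hs
      refine ⟨⟨⟨a - 1, by omega⟩, ⟨l, ?_, ?_⟩⟩, ?_⟩
      · intro i hi
        exact c.blocks_pos (by rw [hb]; simp [hi])
      · simp only; omega
      · apply Composition.ext
        simp only [cons8, hb]
        congr 1; omega

lemma Bstat_cons8 (k n : ℕ) (p : Σ i : Fin (n + 1), Composition (n - i)) :
    (-1 : ℤ) ^ Bstat k (cons8 n p) = wt8 k (p.1 + 1) * (-1) ^ Bstat k p.2 := by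
  unfold Bstat cons8 wt8
  simp only [List.countP_cons, decide_eq_true_eq]
  split_ifs <;> simp [pow_succ]

lemma rec8 (k n : ℕ) : (∑ m : Composition (n + 1), (-1 : ℤ) ^ Bstat k m)
    = ∑ p ∈ Finset.HasAntidiagonal.antidiagonal n,
        wt8 k (p.1 + 1) * ∑ m : Composition p.2, (-1 : ℤ) ^ Bstat k m := by
  rw [← (cons8_bij n).sum_comp (fun m => (-1 : ℤ) ^ Bstat k m), Fintype.sum_sigma,
    Finset.Nat.sum_antidiagonal_eq_sum_range_succ
      (fun i j => wt8 k (i + 1) * ∑ m : Composition j, (-1 : ℤ) ^ Bstat k m),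
    Finset.sum_range]
  refine Finset.sum_congr rfl fun i _ => ?_
  simp only [Bstat_cons8, Finset.mul_sum]

lemma F8 (k : ℕ) (F : PowerSeries ℤ)
    (hF : F = PowerSeries.mk (fun n => ∑ m : Composition n, (-1 : ℤ) ^ Bstat k m)) :
    F = 1 + X * (PowerSeries.mk (fun n => wt8 k (n + 1)) * F) := by
  ext n
  rcases n with _ | n
  · have : ∀ m : Composition 0, Bstat k m = 0 := by
      intro m
      have : m.blocks = [] := m.blocks_eq_nil.2 rfl
      simp [Bstat, this]
    subst hF
    simp [this, composition_card]
  · rw [map_add, coeff_succ_X_mul, coeff_mul, hF]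
    simp [rec8, coeff_one]

lemma W8 (k δ : ℕ) (hδ : δ = if Odd k then 1 else 2) :
    X * PowerSeries.mk (fun n => wt8 k (n + 1)) = X * PowerSeries.mk (fun _ => (1 : ℤ))
      - 2 * (X ^ (k + δ) * PowerSeries.mk (fun n => if Even n then (1 : ℤ) else 0)) := by
  have h2 : (2 : PowerSeries ℤ) = C (2 : ℤ) := by simp
  have hpar : Even (k + δ) := by
    subst hδ; split_ifs with h <;> grind
  have hle : ∀ n, Even n → (k + δ ≤ n ↔ k < n) := by
    intro n hn; subst hδ; split_ifs with h <;> grind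
  have hd : 0 < δ := by subst hδ; split_ifs <;> simp
  ext n
  rw [h2, map_sub, coeff_C_mul, coeff_X_pow_mul']
  rcases n with _ | n
  · have : ¬ (k + δ ≤ 0) := by omega
    simp; omega
  · rw [coeff_succ_X_mul, coeff_succ_X_mul]
    simp only [coeff_mk, wt8]
    by_cases he : Even (n + 1)
    · have := hle _ he
      by_cases hl : k < n + 1
      · have h3 := this.2 hl
        have : Even (n + 1 - (k + δ)) := (Nat.even_sub h3).2 (by tauto)
        simp [he, hl, h3, this]
      · have h3 : ¬ (k + δ ≤ n + 1) := by tauto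
        simp [hl, h3]
    · by_cases h3 : k + δ ≤ n + 1
      · have : ¬ Even (n + 1 - (k + δ)) := by rw [Nat.even_sub h3]; tauto
        simp only [he, this]; simp
      · simp only [he, h3]; simp

lemma E8 : (1 - X ^ 2) * PowerSeries.mk (fun n => if Even n then (1 : ℤ) else 0) = 1 := by
  ext n
  rw [sub_mul, one_mul, map_sub, coeff_X_pow_mul']
  rcases n with _ | _ | n
  · simp
  · simp [coeff_one]
  · simp [coeff_one, Nat.even_add]

lemma O8 : (1 - X) * PowerSeries.mk (fun _ => (1 : ℤ)) = 1 := by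
  rw [mul_comm]
  exact PowerSeries.mk_one_mul_one_sub_eq_one ℤ

theorem stmt8 (k : ℕ) (hk : 1 ≤ k) (δ : ℕ) (hδ : δ = if Odd k then 1 else 2) :
    ((1 - 2 * PowerSeries.X) * (1 - PowerSeries.X ^ 2)
        + 2 * (1 - PowerSeries.X) * PowerSeries.X ^ (k + δ))
      * PowerSeries.mk (fun n => ∑ m : Composition n, (-1 : ℤ) ^ Bstat k m)
      = (1 - PowerSeries.X) * (1 - PowerSeries.X ^ 2) := by
  have hF := F8 k _ rfl
  have hW := W8 k δ hδ
  have hE := E8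
  have hO := O8
  rw [← mul_assoc, hW] at hF
  generalize PowerSeries.mk (fun n => ∑ m : Composition n, (-1 : ℤ) ^ Bstat k m) = F at *
  generalize PowerSeries.mk (fun n => if Even n then (1 : ℤ) else 0) = E at *
  generalize PowerSeries.mk (fun _ => (1 : ℤ)) = O at *
  linear_combination (1 - X) * (1 - X ^ 2) * hF + X * (1 - X ^ 2) * F * hO
    - 2 * X ^ (k + δ) * (1 - X) * F * hE
end

section
/- Let k ≥ 2 be a fixed integer and set δ = 1 if k is odd and δ = 2 if k is even. Let R̃_k(X) = (1 − 2X)(1 + X) + 2X^{k+δ}, a polynomial of degree k + δ, and assume that R̃_k has k + δ pairwise distinct complex roots β_1, …, β_{k+δ}. For n ≥ 1, let E_k(n) be the number of compositions m of n with B(m) even and O_k(n) the number with B(m) odd. Then for every n ≥ 1, as identities in ℂ: E_k(n) = 2^{n−2} + (1/2)·Σ_{j=1}^{k+δ} C̃_j·β_j^{−n} and O_k(n) = 2^{n−2} − (1/2)·Σ_{j=1}^{k+δ} C̃_j·β_j^{−n}, where C̃_j = −(1 − β_j²)/(β_j·R̃_k'(β_j)). -/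
open Polynomial in
theorem aux_nonroot {N : ℕ} (R : Polynomial ℂ) (hdeg : R.natDegree = N) (hN : 0 < N)
    (β : Fin N → ℂ) (hβ : Function.Injective β) (hroot : ∀ j, R.IsRoot (β j))
    (P : Polynomial ℂ) (hP : P.degree < N) :
    ∃ Q : Fin N → Polynomial ℂ, (∀ j, (X - C (β j)) * Q j = R) ∧
      ∑ j, C (P.eval (β j) / R.derivative.eval (β j)) * Q j = P := by
  have hR0 : R ≠ 0 := by
    rintro rfl
    simp at hdeg
    omega
  choose Q hQ using fun j => Polynomial.dvd_iff_isRoot.mpr (hroot j)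
  have hQ0 : ∀ j, Q j ≠ 0 := by
    intro j h
    apply hR0
    rw [hQ j, h, mul_zero]
  have hQdeg : ∀ j, (Q j).degree < N := by
    intro j
    have h1 : R.natDegree = (X - C (β j)).natDegree + (Q j).natDegree := by
      conv_lhs => rw [hQ j]
      exact Polynomial.natDegree_mul (Polynomial.X_sub_C_ne_zero _) (hQ0 j)
    rw [Polynomial.natDegree_X_sub_C] at h1
    rw [Polynomial.degree_eq_natDegree (hQ0 j)]
    exact_mod_cast (by omega : (Q j).natDegree < N)
  have hoff : ∀ i j, i ≠ j → (Q j).eval (β i) = 0 := by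
    intro i j hij
    have h := hroot i
    rw [hQ j, Polynomial.IsRoot.def, Polynomial.eval_mul] at h
    simp only [eval_sub, eval_X, eval_C, mul_eq_zero, sub_eq_zero] at h
    rcases h with h | h
    · exact absurd (hβ h) hij
    · exact h
  have hder : ∀ j, R.derivative.eval (β j) = (Q j).eval (β j) := by
    intro j
    conv_lhs => rw [hQ j]
    simp [Polynomial.derivative_mul]
  have hne : ∀ j, R.derivative.eval (β j) ≠ 0 := by
    intro j h
    apply hQ0 j
    apply Polynomial.eq_zero_of_degree_lt_of_eval_index_eq_zero (s := Finset.univ) (v := β)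
    · exact hβ.injOn
    · simpa using hQdeg j
    · intro i _
      by_cases hij : i = j
      · subst hij
        rw [← hder, h]
      · exact hoff i j hij
  refine ⟨Q, fun j => (hQ j).symm, ?_⟩
  apply Polynomial.eq_of_degrees_lt_of_eval_index_eq (s := Finset.univ) (v := β)
  · exact hβ.injOn
  · simp only [Finset.card_univ, Fintype.card_fin]
    rw [← Polynomial.mem_degreeLT]
    refine Submodule.sum_mem _ fun j _ => ?_
    rw [← Polynomial.smul_eq_C_mul]
    exact Submodule.smul_mem _ _ (Polynomial.mem_degreeLT.mpr (hQdeg j))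
  · simpa using hP
  · intro i _
    rw [Polynomial.eval_finsetSum, Finset.sum_eq_single i]
    · rw [eval_mul, eval_C, ← hder, div_mul_cancel₀ _ (hne i)]
    · intro j _ hj
      rw [eval_mul, hoff i j hj.symm, mul_zero]
    · simp

/-- Signed weight of a part. -/
noncomputable def sgnW (k j : ℕ) : ℂ := if j = 0 then 0 else if Even j ∧ k < j then -1 else 1

/-- Blocks of compositions. -/
noncomputable def blk (n : ℕ) : Finset (List ℕ) :=
  (Finset.univ : Finset (Composition n)).image Composition.blocks

theorem mem_blk (n : ℕ) (l : List ℕ) : l ∈ blk n ↔ (∀ x ∈ l, 0 < x) ∧ l.sum = n := by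
  unfold blk
  simp only [Finset.mem_image, Finset.mem_univ, true_and]
  constructor
  · rintro ⟨c, rfl⟩
    exact ⟨fun x hx => c.blocks_pos hx, c.blocks_sum⟩
  · rintro ⟨h1, h2⟩
    exact ⟨⟨l, fun {i} hi => h1 i hi, h2⟩, rfl⟩

/-- Signed count. -/
noncomputable def aseq (k n : ℕ) : ℂ := ∑ l ∈ blk n, (l.map (sgnW k)).prod

theorem prod_sgn (k : ℕ) (l : List ℕ) (h : ∀ x ∈ l, 0 < x) :
    (l.map (sgnW k)).prod = (-1) ^ (l.countP fun j => decide (Even j ∧ k < j)) := by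
  induction l with
  | nil => simp
  | cons a l ih =>
    have ha : a ≠ 0 := (h a (by simp)).ne'
    have := ih (fun x hx => h x (by simp [hx]))
    rw [List.map_cons, List.prod_cons, this, List.countP_cons]
    by_cases hc : Even a ∧ k < a
    · simp [sgnW, ha, hc, pow_succ]
    · simp [sgnW, ha, hc]

theorem aseq_eq (k n : ℕ) : aseq k n = ∑ m : Composition n, (-1 : ℂ) ^ Bstat k m := by
  unfold aseq blk
  rw [Finset.sum_image]
  · refine Finset.sum_congr rfl fun m _ => ?_
    rw [prod_sgn k _ (fun x hx => m.blocks_pos hx)]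
    rfl
  · intro a _ b _ h
    exact Composition.ext h

theorem aseq_zero (k : ℕ) : aseq k 0 = 1 := by
  have : blk 0 = {[]} := by
    ext l
    rw [mem_blk, Finset.mem_singleton]
    constructor
    · rintro ⟨h1, h2⟩
      cases l with
      | nil => rfl
      | cons a l =>
        have := h1 a (by simp)
        simp at h2
        omega
    · rintro rfl
      simp
  simp [aseq, this]

theorem aseq_succ (k n : ℕ) :
    aseq k (n + 1) = ∑ p ∈ Finset.HasAntidiagonal.antidiagonal n, sgnW k (p.1 + 1) * aseq k p.2 := by
  unfold aseq
  simp_rw [Finset.mul_sum]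
  rw [Finset.sum_sigma']
  symm
  refine Finset.sum_bij (fun x _ => (x.1.1 + 1) :: x.2) ?_ ?_ ?_ ?_
  · rintro ⟨⟨i, j⟩, l⟩ h
    simp only [Finset.mem_sigma, Finset.HasAntidiagonal.mem_antidiagonal, mem_blk] at h
    obtain ⟨h1, h2, h3⟩ := h
    rw [mem_blk]
    refine ⟨?_, ?_⟩
    · intro x hx
      rcases List.mem_cons.mp hx with h | h
      · omega
      · exact h2 x h
    · simp only [List.sum_cons]
      omega
  · rintro ⟨⟨i, j⟩, l⟩ h ⟨⟨i', j'⟩, l'⟩ h' he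
    simp only [Finset.mem_sigma, Finset.HasAntidiagonal.mem_antidiagonal, mem_blk] at h h'
    simp only [List.cons.injEq] at he
    obtain ⟨he1, rfl⟩ := he
    obtain rfl : i = i' := by omega
    obtain rfl : j = j' := by omega
    rfl
  · intro l hl
    rw [mem_blk] at hl
    obtain ⟨h1, h2⟩ := hl
    cases l with
    | nil => simp at h2
    | cons a l =>
      have ha := h1 a (by simp)
      simp only [List.sum_cons] at h2
      refine ⟨⟨⟨a - 1, l.sum⟩, l⟩, ?_, ?_⟩
      · simp only [Finset.mem_sigma, Finset.HasAntidiagonal.mem_antidiagonal, mem_blk]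
        exact ⟨by omega, fun x hx => h1 x (by simp [hx]), trivial⟩
      · simp only [List.cons.injEq, and_true]
        omega
  · rintro ⟨⟨i, j⟩, l⟩ h
    simp

theorem aseq_series (k : ℕ) :
    PowerSeries.mk (aseq k) = 1 + PowerSeries.mk (sgnW k) * PowerSeries.mk (aseq k) := by
  ext n
  rw [map_add, PowerSeries.coeff_mul, PowerSeries.coeff_mk, PowerSeries.coeff_one]
  simp only [PowerSeries.coeff_mk]
  cases n with
  | zero => simp [aseq_zero, sgnW]
  | succ n =>
    rw [Finset.Nat.antidiagonal_succ, Finset.sum_cons, Finset.sum_map, aseq_succ]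
    simp [sgnW]

theorem sgn_series (k δ : ℕ) (hk : 2 ≤ k) (hδ : δ = if Odd k then 1 else 2) :
    (1 - PowerSeries.X ^ 2) * PowerSeries.mk (sgnW k)
      = PowerSeries.X + PowerSeries.X ^ 2 - 2 * PowerSeries.X ^ (k + δ) := by
  ext n
  have h2 : (2 : PowerSeries ℂ) = PowerSeries.C 2 := (map_ofNat PowerSeries.C 2).symm
  rw [h2, sub_mul, one_mul, map_sub, map_sub, map_add, PowerSeries.coeff_X_pow_mul',
    PowerSeries.coeff_C_mul, PowerSeries.coeff_X_pow, PowerSeries.coeff_X_pow,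
    PowerSeries.coeff_X]
  simp only [PowerSeries.coeff_mk]
  have hd : (Odd k ∧ δ = 1) ∨ (Even k ∧ δ = 2) := by
    by_cases h : Odd k
    · left
      simp [h, hδ]
    · right
      simp [h, hδ, Nat.not_odd_iff_even.mp h]
  rcases Nat.lt_or_ge n 3 with hn | hn
  · interval_cases n
    · have : ¬ (0 = k + δ) := by omega
      simp [sgnW, this]
    · have : ¬ (1 = k + δ) := by omega
      simp [sgnW, this]
    · have : ¬ (2 = k + δ) := by rcases hd with h | h <;> omega
      have h' : ¬ (k < 2) := by omega
      simp [sgnW, this, h']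
  · have e1 : n ≠ 1 := by omega
    have e2 : n ≠ 2 := by omega
    have e3 : 2 ≤ n := by omega
    have e4 : n - 2 ≠ 0 := by omega
    have e5 : n ≠ 0 := by omega
    have e6 : Even (n - 2) ↔ Even n := by
      rw [Nat.even_sub e3]
      simp
    simp only [sgnW, e1, e2, e3, e4, e5, e6, if_true, if_false]
    by_cases he : Even n
    · by_cases c1 : n = k + δ
      · have a1 : k < n := by rcases hd with h | h <;> omega
        have a2 : ¬ k < n - 2 := by rcases hd with h | h <;> omega
        simp only [he, a1, a2, ← c1, and_true, and_false, if_true, if_false]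
        norm_num
      · have : k < n ↔ k < n - 2 := by
          rcases hd with ⟨⟨r, hr⟩, h⟩ | ⟨⟨r, hr⟩, h⟩ <;> obtain ⟨t, ht⟩ := he <;> omega
        simp [this, c1]
    · have c1 : n ≠ k + δ := by
        rintro rfl
        apply he
        rcases hd with ⟨h, rfl⟩ | ⟨h, rfl⟩
        · exact h.add_one
        · exact h.add (by decide)
      simp [he, c1]

open Polynomial in
theorem aseq_formula (k : ℕ) (hk : 2 ≤ k) (δ : ℕ) (hδ : δ = if Odd k then 1 else 2)
    (R : Polynomial ℂ)
    (hR : R = (1 - 2 * Polynomial.X) * (1 + Polynomial.X) + 2 * Polynomial.X ^ (k + δ))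
    (β : Fin (k + δ) → ℂ) (hβ : Function.Injective β) (hroot : ∀ j, R.IsRoot (β j))
    (n : ℕ) : aseq k n = ∑ j : Fin (k + δ),
            (-((1 - β j ^ 2) / (β j * R.derivative.eval (β j)))) * (β j)⁻¹ ^ n := by
  have hN : 3 ≤ k + δ := by
    rw [hδ]
    split_ifs <;> omega
  have hdeg : R.natDegree = k + δ := by
    have h : R = C 2 * X ^ (k + δ) + (C (-2) * X ^ 2 + C (-1) * X + C 1) := by
      rw [hR]
      simp only [map_neg, map_ofNat, map_one]
      ring
    rw [h, natDegree_add_eq_left_of_natDegree_lt]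
    · exact natDegree_C_mul_X_pow _ _ (by norm_num)
    · rw [natDegree_C_mul_X_pow _ _ (by norm_num)]
      exact lt_of_le_of_lt natDegree_quadratic_le (by omega)
  have hb0 : ∀ j, β j ≠ 0 := by
    intro j h
    have := hroot j
    rw [h, hR] at this
    have h0 : k + δ ≠ 0 := by omega
    simp only [Polynomial.IsRoot.def, eval_add, eval_mul, eval_sub, eval_pow, eval_X, zero_pow h0,
      eval_one, mul_zero] at this
    norm_num at this
  obtain ⟨Q, hQ, hsum⟩ := aux_nonroot R hdeg (by omega) β hβ hroot (1 - X ^ 2) (by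
    refine lt_of_le_of_lt (b := (2 : WithBot ℕ)) ?_ (by exact_mod_cast (by omega : 2 < k + δ))
    compute_degree)
  have hR' : (R : PowerSeries ℂ) = 1 - PowerSeries.X - 2 * PowerSeries.X ^ 2
      + 2 * PowerSeries.X ^ (k + δ) := by
    have h2 : ((2 : ℂ[X]) : PowerSeries ℂ) = 2 := by
      exact map_ofNat (Polynomial.coeToPowerSeries.ringHom (R := ℂ)) 2
    rw [hR]
    have h3 : ((1 - 2 * X : ℂ[X]) : PowerSeries ℂ) = 1 - 2 * PowerSeries.X := by
      have := map_sub (Polynomial.coeToPowerSeries.ringHom (R := ℂ)) 1 (2 * X)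
      simpa [h2] using this
    rw [Polynomial.coe_add, Polynomial.coe_mul, h3]
    simp [h2]
    ring
  have hA : PowerSeries.mk (aseq k) * (R : PowerSeries ℂ) = 1 - PowerSeries.X ^ 2 := by
    have h1 := aseq_series k
    have h2 := sgn_series k δ hk hδ
    rw [hR']
    linear_combination (1 - PowerSeries.X ^ 2) * h1 + PowerSeries.mk (aseq k) * h2
  set c : Fin (k + δ) → ℂ := fun j => -((1 - β j ^ 2) / (β j * R.derivative.eval (β j))) with hc
  have hB : PowerSeries.mk (fun n => ∑ j, c j * (β j)⁻¹ ^ n) * (R : PowerSeries ℂ)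
      = 1 - PowerSeries.X ^ 2 := by
    have e1 : PowerSeries.mk (fun n => ∑ j, c j * (β j)⁻¹ ^ n)
        = ∑ j, PowerSeries.C (c j) * PowerSeries.mk (fun n => (β j)⁻¹ ^ n) := by
      ext n
      simp [map_sum, PowerSeries.coeff_C_mul]
    have e2 : ∀ j, PowerSeries.mk (fun n => (β j)⁻¹ ^ n) *
        (PowerSeries.X - PowerSeries.C (β j)) = PowerSeries.C (-β j) := by
      intro j
      ext n
      rw [mul_sub, map_sub, mul_comm _ (PowerSeries.C (β j)), PowerSeries.coeff_C_mul]
      cases n with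
      | zero => simp
      | succ n =>
        rw [PowerSeries.coeff_succ_mul_X]
        simp [PowerSeries.coeff_C, pow_succ]
        field_simp [hb0 j]
        simp
    have e3 : ((1 - X ^ 2 : ℂ[X]) : PowerSeries ℂ) = 1 - PowerSeries.X ^ 2 := by
      have := map_sub (Polynomial.coeToPowerSeries.ringHom (R := ℂ)) 1 (X ^ 2)
      simpa using this
    rw [e1, ← e3, ← hsum, Finset.sum_mul]
    have e4 := map_sum (Polynomial.coeToPowerSeries.ringHom (R := ℂ))
      (fun j => C (eval (β j) (1 - X ^ 2) / eval (β j) (derivative R)) * Q j) Finset.univ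
    simp only [Polynomial.coeToPowerSeries.ringHom_apply] at e4
    rw [e4]
    refine Finset.sum_congr rfl fun j _ => ?_
    have e5 : (R : PowerSeries ℂ) = (PowerSeries.X - PowerSeries.C (β j)) * (Q j : PowerSeries ℂ) := by
      conv_lhs => rw [← hQ j]
      have := map_sub (Polynomial.coeToPowerSeries.ringHom (R := ℂ)) X (C (β j))
      simp only [Polynomial.coeToPowerSeries.ringHom_apply, coe_X, coe_C] at this
      rw [Polynomial.coe_mul, this]
    have e6 : eval (β j) (1 - X ^ 2) / eval (β j) (derivative R) = c j * (-β j) := by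
      simp only [hc, eval_sub, eval_one, eval_pow, eval_X]
      have := hb0 j
      by_cases hd : eval (β j) (derivative R) = 0
      · simp [hd]
      · field_simp
    rw [e6, Polynomial.coe_mul, Polynomial.coe_C, map_mul, ← e2 j]
    conv_lhs => rw [e5]
    ring
  have hRne : (R : PowerSeries ℂ) ≠ 0 := by
    intro h
    have : R = 0 := by exact_mod_cast h
    rw [this] at hdeg
    simp at hdeg
    omega
  have := mul_right_cancel₀ hRne (hA.trans hB.symm)
  have := congrArg (PowerSeries.coeff n) this
  simpa only [PowerSeries.coeff_mk] using this

theorem stmt9 (k : ℕ) (hk : 2 ≤ k) (δ : ℕ) (hδ : δ = if Odd k then 1 else 2)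
    (R : Polynomial ℂ)
    (hR : R = (1 - 2 * Polynomial.X) * (1 + Polynomial.X) + 2 * Polynomial.X ^ (k + δ))
    (β : Fin (k + δ) → ℂ) (hβ : Function.Injective β) (hroot : ∀ j, R.IsRoot (β j))
    (n : ℕ) (hn : 1 ≤ n)
    (E O : ℕ)
    (hE : E = (Finset.univ.filter fun m : Composition n => Even (Bstat k m)).card)
    (hO : O = (Finset.univ.filter fun m : Composition n => Odd (Bstat k m)).card) :
    (E : ℂ) = (2 : ℂ) ^ ((n : ℤ) - 2)
        + (1 / 2) * ∑ j : Fin (k + δ),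
            (-((1 - β j ^ 2) / (β j * R.derivative.eval (β j)))) * (β j)⁻¹ ^ n ∧
    (O : ℂ) = (2 : ℂ) ^ ((n : ℤ) - 2)
        - (1 / 2) * ∑ j : Fin (k + δ),
            (-((1 - β j ^ 2) / (β j * R.derivative.eval (β j)))) * (β j)⁻¹ ^ n := by
  have hform := aseq_formula k hk δ hδ R hR β hβ hroot n
  rw [← hform]
  have hsum : E + O = 2 ^ (n - 1) := by
    rw [hE, hO, ← composition_card n, ← Finset.card_univ]
    simp_rw [← Nat.not_even_iff_odd]
    exact Finset.card_filter_add_card_filter_not _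
  have hdiff : aseq k n = (E : ℂ) - O := by
    rw [aseq_eq, hE, hO, ← Finset.sum_filter_add_sum_filter_not Finset.univ
      (fun m : Composition n => Even (Bstat k m))]
    simp_rw [Nat.not_even_iff_odd]
    rw [Finset.sum_congr rfl (g := fun _ => (1 : ℂ))
      (fun m hm => (Finset.mem_filter.mp hm).2.neg_one_pow),
      Finset.sum_congr (s₁ := Finset.univ.filter fun m : Composition n => Odd (Bstat k m)) rfl
        (g := fun _ => (-1 : ℂ))
      (fun m hm => (Finset.mem_filter.mp hm).2.neg_one_pow)]
    simp
    ring
  have hsum' : (E : ℂ) + O = 2 * (2 : ℂ) ^ ((n : ℤ) - 2) := by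
    have h1 : (E : ℂ) + O = 2 ^ (n - 1) := by exact_mod_cast hsum
    rw [h1, ← zpow_natCast, ← zpow_one_add₀ (by norm_num)]
    congr 1
    omega
  rw [hdiff]
  constructor
  · linear_combination (1 / 2) * hsum'
  · linear_combination (1 / 2) * hsum'
end

section
/- Let k ≥ 1 be a fixed integer and set δ = 1 if k is odd and δ = 2 if k is even. For n ≥ 0 define T_k(n) = Σ_{m∈P(n)} B(m), the total number of occurrences of parts in Ev_{>k} among all compositions of n. Then in ℤ[[x]]: (1 − 2x)²·(1 + x) · Σ_{n≥0} T_k(n)·x^n = x^{k+δ}·(1 − x); equivalently, (1 − 2x)²·(1 − x²) · Σ_{n≥0} T_k(n)·x^n = x^{k+δ}·(1 − x)². -/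
open PowerSeries

/-- `Tk k n` is the total number of occurrences of even parts strictly greater
than `k` among all compositions of `n`. -/
def Tk (k n : ℕ) : ℕ := ∑ m : Composition n, Bstat k m

lemma comp_ext_sigma {a b : ℕ} (m : Composition a) (m' : Composition b)
    (h : m.blocks = m'.blocks) : a = b ∧ HEq m m' := by
  have hab : a = b := by rw [← m.blocks_sum, ← m'.blocks_sum, h]
  subst hab
  exact ⟨rfl, heq_of_eq (Composition.ext h)⟩

lemma comp_sum_succ (n : ℕ) (f : List ℕ → ℤ) :
    ∑ m : Composition (n + 1), f m.blocks
      = ∑ p ∈ Finset.HasAntidiagonal.antidiagonal n, ∑ m : Composition p.2, f ((p.1 + 1) :: m.blocks) := by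
  rw [Finset.sum_sigma']
  symm
  refine Finset.sum_bij (fun (x : (p : ℕ × ℕ) × Composition p.2) hx =>
    (⟨(x.1.1 + 1) :: x.2.blocks, ?_, ?_⟩ : Composition (n + 1))) ?_ ?_ ?_ ?_
  · intro i hi
    rcases List.mem_cons.1 hi with h | h
    · omega
    · exact x.2.blocks_pos h
  · have := x.2.blocks_sum
    simp only [Finset.mem_sigma, Finset.HasAntidiagonal.mem_antidiagonal] at hx
    simp only [List.sum_cons]
    omega
  · intros; simp
  · rintro ⟨⟨a, b⟩, m⟩ _ ⟨⟨a', b'⟩, m'⟩ _ h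
    simp only [Composition.mk.injEq, List.cons.injEq] at h
    obtain ⟨h1, h2⟩ := h
    dsimp only at m m' h1 h2
    obtain ⟨h3, h4⟩ := comp_ext_sigma m m' h2
    subst h3
    obtain rfl : a = a' := by omega
    obtain rfl := eq_of_heq h4
    rfl
  · rintro ⟨l, hl, hs⟩ _
    cases l with
    | nil => simp at hs
    | cons a t =>
      have ha : 0 < a := hl (by simp)
      simp only [List.sum_cons] at hs
      refine ⟨⟨(a - 1, t.sum), ⟨t, fun h => hl (List.mem_cons_of_mem _ h), rfl⟩⟩, ?_, ?_⟩
      · simp only [Finset.mem_sigma, Finset.HasAntidiagonal.mem_antidiagonal, Finset.mem_univ, and_true]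
        omega
      · apply Composition.ext
        simp only [List.cons.injEq, and_true]
        omega
  · intros; rfl

/-- indicator series -/
noncomputable def Eser (k : ℕ) : PowerSeries ℤ := PowerSeries.mk fun n => if Even n ∧ k < n then 1 else 0

/-- shifted indicator series -/
noncomputable def Fser (k : ℕ) : PowerSeries ℤ :=
  PowerSeries.mk fun n => if Even (n + 1) ∧ k < n + 1 then 1 else 0

/-- composition counts -/
noncomputable def Cser : PowerSeries ℤ :=
  PowerSeries.mk fun n => ∑ _m : Composition n, (1 : ℤ)

lemma Eser_eq (k : ℕ) : Eser k = X * Fser k := by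
  ext n
  cases n with
  | zero => simp [Eser]
  | succ n => simp [Eser, Fser, coeff_succ_X_mul]

lemma Cser_eq : Cser = 1 + X * (PowerSeries.mk 1 * Cser) := by
  ext n
  cases n with
  | zero => simp [Cser, composition_card]
  | succ n =>
    rw [map_add, coeff_succ_X_mul, coeff_mul, Cser, coeff_mk, comp_sum_succ n (fun _ => 1)]
    simp [coeff_one]

lemma Tser_eq (k : ℕ) : PowerSeries.mk (fun n => (Tk k n : ℤ))
    = X * (Fser k * Cser) + X * (PowerSeries.mk 1 * PowerSeries.mk (fun n => (Tk k n : ℤ))) := by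
  ext n
  cases n with
  | zero =>
    have : ∀ m : Composition 0, m.blocks = [] := by
      intro m
      rw [List.eq_nil_iff_forall_not_mem]
      intro a ha
      have h1 := m.blocks_pos ha
      have h2 := List.le_sum_of_mem ha
      rw [m.blocks_sum] at h2
      omega
    simp [Tk, Bstat, this]
  | succ n =>
    rw [map_add, coeff_succ_X_mul, coeff_succ_X_mul, coeff_mul, coeff_mul, coeff_mk,
      ← Finset.sum_add_distrib]
    have := comp_sum_succ n (fun l => ((l.countP fun j => decide (Even j ∧ k < j) : ℕ) : ℤ))
    simp only [Tk, Bstat, Nat.cast_sum]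
    rw [this]
    refine Finset.sum_congr rfl fun p _ => ?_
    simp only [Fser, Cser, coeff_mk, List.countP_cons, Nat.cast_add, Finset.sum_add_distrib,
      Pi.one_apply, one_mul, Finset.mul_sum, mul_one, decide_eq_true_eq, Nat.cast_ite,
      Nat.cast_one, Nat.cast_zero]
    ring

lemma E_closed (k δ : ℕ) (hδ : δ = if Odd k then 1 else 2) :
    (1 - X ^ 2) * Eser k = X ^ (k + δ) := by
  ext n
  rw [sub_mul, one_mul, map_sub, coeff_X_pow_mul', coeff_X_pow]
  simp only [Eser, coeff_mk]
  split_ifs at hδ <;> simp only [Nat.odd_iff, Nat.even_iff] at * <;> split_ifs <;> omega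

theorem stmt10 (k : ℕ) (hk : 1 ≤ k) (δ : ℕ) (hδ : δ = if Odd k then 1 else 2) :
    (1 - 2 * PowerSeries.X) ^ 2 * (1 + PowerSeries.X)
        * PowerSeries.mk (fun n => (Tk k n : ℤ))
      = PowerSeries.X ^ (k + δ) * (1 - PowerSeries.X) ∧
    (1 - 2 * PowerSeries.X) ^ 2 * (1 - PowerSeries.X ^ 2)
        * PowerSeries.mk (fun n => (Tk k n : ℤ))
      = PowerSeries.X ^ (k + δ) * (1 - PowerSeries.X) ^ 2 := by
  have hE := E_closed k δ hδ
  have hEF := Eser_eq k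
  have hC := Cser_eq
  have hT := Tser_eq k
  have hG : (PowerSeries.mk 1 : PowerSeries ℤ) * (1 - X) = 1 := PowerSeries.mk_one_mul_one_sub_eq_one ℤ
  generalize PowerSeries.mk (fun n => (Tk k n : ℤ)) = T at *
  generalize (PowerSeries.mk 1 : PowerSeries ℤ) = G at *
  have hC' : (1 - 2 * X) * Cser = 1 - X := by
    linear_combination (1 - X) * hC + X * Cser * hG
  have hT' : (1 - 2 * X) * T = (1 - X) * Eser k * Cser := by
    linear_combination (1 - X) * hT + X * T * hG - (1 - X) * Cser * hEF
  have h2 : (1 - 2 * X) ^ 2 * (1 - X ^ 2) * T = X ^ (k + δ) * (1 - X) ^ 2 := by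
    linear_combination (1 - 2 * X) * (1 - X ^ 2) * hT' + (1 - X ^ 2) * (1 - X) * Eser k * hC'
      + (1 - X) ^ 2 * hE
  refine ⟨?_, h2⟩
  have hne : (1 - X : PowerSeries ℤ) ≠ 0 := by
    intro h
    rw [h, mul_zero] at hG
    exact zero_ne_one hG
  apply mul_left_cancel₀ hne
  linear_combination h2
end

section
/- Let k ≥ 1 be a fixed integer and set δ = 1 if k is odd and δ = 2 if k is even. For n ≥ 0 define T_k(n) = Σ_{m∈P(n)} B(m). Then there exist real constants A, B, C such that for every n > k + δ − 2 one has T_k(n) = (A·n + B)·2^n + C·(−1)^n. -/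
def cmps (n : ℕ) : Finset (List ℕ) := Finset.univ.image (fun m : Composition n => m.blocks)

lemma mem_cmps (n : ℕ) (l : List ℕ) : l ∈ cmps n ↔ (∀ i ∈ l, 0 < i) ∧ l.sum = n := by
  unfold cmps
  simp only [Finset.mem_image, Finset.mem_univ, true_and]
  constructor
  · rintro ⟨m, rfl⟩
    exact ⟨fun i hi => m.blocks_pos hi, m.blocks_sum⟩
  · rintro ⟨h1, h2⟩
    exact ⟨⟨l, fun {i} hi => h1 i hi, h2⟩, rfl⟩

lemma sum_cmps (n : ℕ) (f : List ℕ → ℝ) :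
    ∑ l ∈ cmps n, f l = ∑ m : Composition n, f m.blocks := by
  unfold cmps
  rw [Finset.sum_image]
  intro a _ b _ h
  exact Composition.ext h

lemma cmps_succ (n : ℕ) : cmps (n+1) =
    (Finset.HasAntidiagonal.antidiagonal n).biUnion fun p => (cmps p.2).image (List.cons (p.1+1)) := by
  ext l
  simp only [Finset.mem_biUnion, Finset.mem_image, mem_cmps, Finset.HasAntidiagonal.mem_antidiagonal]
  constructor
  · rintro ⟨h1, h2⟩
    cases l with
    | nil => simp at h2
    | cons a t =>
      have ha := h1 a (by simp)
      simp only [List.sum_cons] at h2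
      refine ⟨(a-1, t.sum), by simp only [Finset.HasAntidiagonal.mem_antidiagonal]; omega, t, ⟨fun i hi => h1 i (by simp [hi]), rfl⟩, ?_⟩
      simp; omega
  · rintro ⟨⟨i, j⟩, h, t, ⟨h1, h2⟩, rfl⟩
    simp only at *
    constructor
    · intro x hx
      rcases List.mem_cons.1 hx with rfl | hx
      · omega
      · exact h1 x hx
    · simp; omega

lemma sum_cmps_succ (n : ℕ) (f : List ℕ → ℝ) :
    ∑ l ∈ cmps (n+1), f l = ∑ p ∈ Finset.HasAntidiagonal.antidiagonal n, ∑ l ∈ cmps p.2, f ((p.1+1) :: l) := by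
  rw [cmps_succ, Finset.sum_biUnion]
  · refine Finset.sum_congr rfl fun p _ => ?_
    rw [Finset.sum_image]
    intro a _ b _ h
    simpa using h
  · intro p hp q hq hpq
    simp only [Function.onFun]
    rw [Finset.disjoint_left]
    rintro l h1 h2
    simp only [Finset.mem_image] at h1 h2
    obtain ⟨a, _, rfl⟩ := h1
    obtain ⟨b, _, h⟩ := h2
    simp only [List.cons.injEq] at h
    simp only [Finset.mem_coe, Finset.HasAntidiagonal.mem_antidiagonal] at hp hq
    apply hpq
    ext <;> omega

noncomputable def gd (k j : ℕ) : ℝ := if Even j ∧ k < j then 1 else 0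

noncomputable def cc (n : ℕ) : ℝ := ∑ l ∈ cmps n, 1

noncomputable def GG (k n : ℕ) : ℝ := ∑ p ∈ Finset.HasAntidiagonal.antidiagonal n, gd k (p.1+1) * cc p.2

lemma cc_zero : cc 0 = 1 := by
  rw [cc, sum_cmps]; simp [composition_card]

lemma cc_succ (n : ℕ) : cc (n+1) = 2 * cc n - if n = 0 then 1 else 0 := by
  unfold cc
  rw [sum_cmps, sum_cmps]
  cases n with
  | zero => simp [composition_card]; norm_num
  | succ n => simp [composition_card, pow_succ]; ring

lemma GG_succ (k n : ℕ) : GG k (n+1) = 2 * GG k n + gd k (n+2) - gd k (n+1) := by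
  unfold GG
  rw [Finset.Nat.sum_antidiagonal_succ']
  simp only [cc_succ, cc_zero, mul_sub, Finset.sum_sub_distrib]
  have h : ∑ p ∈ Finset.HasAntidiagonal.antidiagonal n, gd k (p.1+1) * (if p.2 = 0 then 1 else 0)
      = gd k (n+1) := by
    rw [Finset.sum_eq_single (n, 0)]
    · simp
    · rintro ⟨i, j⟩ h1 h2
      have : j ≠ 0 := by
        rintro rfl
        simp at h1
        simp [h1] at h2
      simp [this]
    · simp
  rw [h, Finset.mul_sum]
  have h3 : ∀ p : ℕ × ℕ, gd k (p.1+1) * (2 * cc p.2) = 2 * (gd k (p.1+1) * cc p.2) :=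
    fun p => by ring
  simp only [h3]
  ring

lemma Tk_cmps (k n : ℕ) : (Tk k n : ℝ) =
    ∑ l ∈ cmps n, ((l.countP fun j => decide (Even j ∧ k < j) : ℕ) : ℝ) := by
  rw [sum_cmps]
  simp [Tk, Bstat]

lemma Tk_succ (k n : ℕ) : (Tk k (n+1) : ℝ) =
    GG k n + ∑ p ∈ Finset.HasAntidiagonal.antidiagonal n, (Tk k p.2 : ℝ) := by
  rw [Tk_cmps, sum_cmps_succ, GG, ← Finset.sum_add_distrib]
  refine Finset.sum_congr rfl fun p _ => ?_
  rw [Tk_cmps, cc, Finset.mul_sum, ← Finset.sum_add_distrib]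
  refine Finset.sum_congr rfl fun l _ => ?_
  rw [List.countP_cons, gd]
  push_cast
  simp only [decide_eq_true_eq]
  ring

lemma Tk_succ2 (k n : ℕ) : (Tk k (n+2) : ℝ) = 2 * Tk k (n+1) + GG k (n+1) - GG k n := by
  have h := Tk_succ k n
  rw [Tk_succ k (n+1), Finset.Nat.sum_antidiagonal_succ]
  simp only
  linarith

lemma Tk_zero (k : ℕ) : (Tk k 0 : ℝ) = 0 := by
  rw [Tk_cmps]
  apply Finset.sum_eq_zero
  intro l hl
  rw [mem_cmps] at hl
  cases l with
  | nil => simp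
  | cons a t =>
    have := hl.1 a (by simp)
    have := hl.2
    simp at this
    omega

theorem stmt12 (k : ℕ) (hk : 1 ≤ k) (δ : ℕ) (hδ : δ = if Odd k then 1 else 2) :
    ∃ A B C : ℝ, ∀ n : ℕ, k + δ - 2 < n →
      (Tk k n : ℝ) = (A * n + B) * 2 ^ n + C * (-1) ^ n := by
  obtain ⟨q, hq, hg⟩ : ∃ q, k + δ = 2 * q + 2 ∧ ∀ j, (Even j ∧ k < j) ↔ (Even j ∧ 2*q+1 < j) := by
    by_cases h : Odd k
    · obtain ⟨r, hr⟩ := h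
      have : δ = 1 := by rw [hδ, if_pos ⟨r, hr⟩]
      exact ⟨r, by omega, fun j => by rw [hr]⟩
    · have h2 : δ = 2 := by rw [hδ, if_neg h]
      rw [Nat.not_odd_iff_even] at h
      obtain ⟨r, hr⟩ := h
      refine ⟨r, by omega, fun j => ⟨?_, fun h => ⟨h.1, by omega⟩⟩⟩
      rintro ⟨⟨s, hs⟩, h⟩
      exact ⟨⟨s, hs⟩, by omega⟩
  have g0 : ∀ j, j ≤ 2*q+1 → gd k j = 0 := by
    intro j hj
    rw [gd, if_neg]
    rw [hg]; omega
  have g1 : ∀ m, gd k (2*q+1+m) = (1 - (-1)^m)/2 := by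
    intro m
    rw [gd]
    simp only [hg]
    rcases Nat.even_or_odd m with h | h
    · rw [h.neg_one_pow, if_neg]; norm_num
      intro ⟨h1, _⟩
      obtain ⟨a, ha⟩ := h
      obtain ⟨b, hb⟩ := h1
      omega
    · rw [h.neg_one_pow, if_pos]; norm_num
      obtain ⟨a, ha⟩ := h
      exact ⟨⟨q+a+1, by omega⟩, by omega⟩
  have G0 : ∀ n, n ≤ 2*q → GG k n = 0 := by
    intro n hn
    unfold GG
    refine Finset.sum_eq_zero fun p hp => ?_
    rw [Finset.HasAntidiagonal.mem_antidiagonal] at hp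
    rw [g0 _ (by omega), zero_mul]
  have G1 : ∀ m, GG k (2*q+m) = (2^m - (-1)^m)/3 := by
    intro m
    induction m with
    | zero => simp [G0]
    | succ m ih =>
      have := GG_succ k (2*q+m)
      rw [← add_assoc, this, ih, show 2*q+m+2 = 2*q+1+(m+1) by ring,
        show 2*q+m+1 = 2*q+1+m by ring, g1, g1]
      ring
  have T0 : ∀ n, n ≤ 2*q+1 → (Tk k n : ℝ) = 0 := by
    intro n
    induction n using Nat.strong_induction_on with
    | _ n ih =>
      intro hn
      cases n with
      | zero => exact Tk_zero k
      | succ n =>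
        rw [Tk_succ, G0 n (by omega), zero_add]
        refine Finset.sum_eq_zero fun p hp => ?_
        rw [Finset.HasAntidiagonal.mem_antidiagonal] at hp
        exact ih _ (by omega) (by omega)
  have T1 : ∀ m : ℕ, (Tk k (2*q+1+m) : ℝ) = (m/6 + 2/9) * 2^m - 2/9 * (-1)^m := by
    intro m
    induction m with
    | zero => rw [T0 _ (by omega)]; norm_num
    | succ m ih =>
      have h := Tk_succ2 k (2*q+m)
      rw [show 2*q+m+2 = 2*q+1+(m+1) by ring, show 2*q+m+1 = 2*q+1+m by ring, ih, G1,
        show 2*q+1+m = 2*q+(m+1) by ring, G1] at h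
      rw [h]
      push_cast
      ring
  refine ⟨1/6/2^(2*q+1), (2/9 - (2*q+1)/6)/2^(2*q+1), 2/9, fun n hn => ?_⟩
  obtain ⟨m, rfl⟩ : ∃ m, n = 2*q+1+m := ⟨n - (2*q+1), by omega⟩
  rw [T1, pow_add 2 (2*q+1) m, pow_add (-1 : ℝ) (2*q+1) m, Odd.neg_one_pow (⟨q, rfl⟩ : Odd (2*q+1))]
  have : (2:ℝ)^(2*q+1) ≠ 0 := by positivity
  push_cast
  field_simp
  ring
end

section
/- Let k ≥ 1 be a fixed integer and let ℓ ≥ 0 be a fixed integer. For n ≥ 0 let F_{k,ℓ}(n) denote the number of compositions m = (m_1, …, m_r) of n with r ≥ ℓ + 1, m_t ∉ Ev_{>k} for all 1 ≤ t ≤ ℓ, and m_{ℓ+1} ∈ Ev_{>k} (i.e. compositions whose first part lying in Ev_{>k} occurs exactly at position ℓ + 1). Let S(x) = Σ_{j≥1, j∉Ev_{>k}} x^j and B(x) = Σ_{j∈Ev_{>k}} x^j in ℤ[[x]]. Then in ℤ[[x]]: (1 − 2x) · Σ_{n≥0} F_{k,ℓ}(n)·x^n = (1 − x)·S(x)^ℓ·B(x).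 -/
open PowerSeries

/-- `Fcount k ℓ n` is the number of compositions of `n` with at least `ℓ + 1` parts,
whose first `ℓ` parts are not even integers greater than `k`, and whose `(ℓ+1)`-st part
is an even integer greater than `k`. -/
def Fcount (k ℓ n : ℕ) : ℕ :=
  (Finset.univ.filter fun m : Composition n =>
    ℓ + 1 ≤ m.blocks.length ∧
      (∀ t < ℓ, ¬(Even (m.blocks.getD t 0) ∧ k < m.blocks.getD t 0)) ∧
      (Even (m.blocks.getD ℓ 0) ∧ k < m.blocks.getD ℓ 0)).card

/-- `Sgen k = Σ_{j ≥ 1, j ∉ Ev_{>k}} x^j ∈ ℤ[[x]]`. -/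
noncomputable def Sgen (k : ℕ) : PowerSeries ℤ :=
  PowerSeries.mk fun j => if 1 ≤ j ∧ ¬(Even j ∧ k < j) then 1 else 0

/-- `Bgen k = Σ_{j ∈ Ev_{>k}} x^j ∈ ℤ[[x]]`. -/
noncomputable def Bgen (k : ℕ) : PowerSeries ℤ :=
  PowerSeries.mk fun j => if Even j ∧ k < j then 1 else 0

open Classical in
noncomputable def cntL (P : List ℕ → Prop) (n : ℕ) : ℕ :=
  (Finset.univ.filter fun m : Composition n => P m.blocks).card

open Classical in
theorem cntL_cons (A : ℕ → Prop) (hA : ∀ a, A a → 0 < a) (P Q : List ℕ → Prop)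
    (h0 : ¬ P []) (h1 : ∀ a l, 0 < a → (P (a :: l) ↔ A a ∧ Q l)) :
    PowerSeries.mk (fun n => (cntL P n : ℤ)) =
      PowerSeries.mk (fun j => if A j then (1 : ℤ) else 0)
        * PowerSeries.mk (fun n => (cntL Q n : ℤ)) := by
  ext n
  rw [PowerSeries.coeff_mul]
  simp only [PowerSeries.coeff_mk, ite_mul, one_mul, zero_mul]
  rw [← Finset.sum_filter]
  have key : ((((Finset.HasAntidiagonal.antidiagonal n).filter (fun p => A p.1)).sigma
      (fun p => Finset.univ.filter fun m : Composition p.2 => Q m.blocks))).card = cntL P n := by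
    unfold cntL
    refine Finset.card_bij (fun x hx => ⟨x.1.1 :: x.2.blocks, ?_, ?_⟩) ?_ ?_ ?_
    · intro i hi
      simp only [Finset.mem_sigma, Finset.mem_filter] at hx
      rcases List.mem_cons.1 hi with rfl | hi
      · exact hA _ hx.1.2
      · exact x.2.blocks_pos hi
    · simp only [Finset.mem_sigma, Finset.mem_filter, Finset.HasAntidiagonal.mem_antidiagonal] at hx
      rw [List.sum_cons, x.2.blocks_sum]
      exact hx.1.1
    · intro x hx
      simp only [Finset.mem_sigma, Finset.mem_filter, Finset.mem_univ, true_and] at hx ⊢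
      exact (h1 _ _ (hA _ hx.1.2)).2 ⟨hx.1.2, hx.2⟩
    · rintro ⟨⟨a, b⟩, c⟩ _ ⟨⟨a', b'⟩, c'⟩ _ h
      simp only [Composition.mk.injEq, List.cons.injEq] at h
      obtain ⟨rfl, h⟩ := h
      have hb : b = b' := by
        have h1 := c.blocks_sum
        have h2 := c'.blocks_sum
        simp only at h1 h2
        rw [← h1, ← h2, h]
      subst hb
      have : c = c' := Composition.ext h
      rw [this]
    · rintro ⟨l, hl, hs⟩ hm
      simp only [Finset.mem_filter, Finset.mem_univ, true_and] at hm
      cases l with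
      | nil => exact absurd hm h0
      | cons a l =>
        have ha : 0 < a := hl (by simp)
        have := (h1 a l ha).1 hm
        refine ⟨⟨(a, l.sum), ⟨l, fun {i} hi => hl (by simp [hi]), rfl⟩⟩, ?_, rfl⟩
        simp only [Finset.mem_sigma, Finset.mem_filter, Finset.mem_univ, true_and,
          Finset.HasAntidiagonal.mem_antidiagonal]
        exact ⟨⟨by simpa using hs, this.1⟩, this.2⟩
  rw [← key, Finset.card_sigma]
  push_cast
  rfl

theorem cntL_true :
    (1 - 2 * PowerSeries.X) * PowerSeries.mk (fun n => (cntL (fun _ => True) n : ℤ))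
      = 1 - PowerSeries.X := by
  have h : ∀ n, cntL (fun _ => True) n = 2 ^ (n - 1) := by
    intro n
    simp [cntL, composition_card]
  ext n
  have e : ((2 : PowerSeries ℤ)) = PowerSeries.C 2 := by simp
  rw [sub_mul, one_mul, e, mul_assoc, map_sub, PowerSeries.coeff_C_mul, map_sub]
  rcases n with _ | _ | n
  · simp [h]
  · simp [h, PowerSeries.coeff_succ_X_mul, PowerSeries.coeff_one]
  · simp only [PowerSeries.coeff_succ_X_mul, PowerSeries.coeff_mk, h, PowerSeries.coeff_one,
      PowerSeries.coeff_X]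
    simp [pow_succ]
    ring

def PF (k ℓ : ℕ) (l : List ℕ) : Prop :=
    ℓ + 1 ≤ l.length ∧
      (∀ t < ℓ, ¬(Even (l.getD t 0) ∧ k < l.getD t 0)) ∧
      (Even (l.getD ℓ 0) ∧ k < l.getD ℓ 0)

theorem Fcount_eq (k ℓ n : ℕ) : Fcount k ℓ n = cntL (PF k ℓ) n := by
  unfold Fcount cntL PF
  congr

theorem F_eq (k ℓ : ℕ) : PowerSeries.mk (fun n => (cntL (PF k ℓ) n : ℤ)) =
    Sgen k ^ ℓ * (Bgen k * PowerSeries.mk (fun n => (cntL (fun _ => True) n : ℤ))) := by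
  induction ℓ with
  | zero =>
    rw [cntL_cons (fun j => Even j ∧ k < j) (fun a h => by omega) (PF k 0) (fun _ => True)
      (by simp [PF]) (by intro a l _; simp [PF]), pow_zero, one_mul]
    unfold Bgen
    congr 2
    funext j
    congr
  | succ ℓ ih =>
    rw [cntL_cons (fun j => 1 ≤ j ∧ ¬(Even j ∧ k < j)) (fun a h => by omega)
      (PF k (ℓ + 1)) (PF k ℓ) (by simp [PF]) ?_, ih, pow_succ', mul_assoc]
    · unfold Sgen
      congr 2
      funext j
      congr
    · intro a l ha
      simp only [PF, List.length_cons, Nat.forall_lt_succ_left, List.getD_cons_zero,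
        List.getD_cons_succ, Nat.add_le_add_iff_right]
      have : 1 ≤ a := ha
      tauto

theorem stmt14 (k : ℕ) (hk : 1 ≤ k) (ℓ : ℕ) :
    (1 - 2 * PowerSeries.X) * PowerSeries.mk (fun n => (Fcount k ℓ n : ℤ))
      = (1 - PowerSeries.X) * Sgen k ^ ℓ * Bgen k := by
  simp only [Fcount_eq]
  rw [F_eq, ← cntL_true]
  ring
end

section
/- Let k ≥ 1 be a fixed integer, set δ = 1 if k is odd and δ = 2 if k is even, and let ℓ ≥ 1 be a fixed integer. For n ≥ 0 let L_{k,ℓ}(n) denote the number of compositions m = (m_1, …, m_r) of n with r ≥ ℓ and m_t ∉ Ev_{>k} for all 1 ≤ t ≤ ℓ. Then there exist complex constants A, B_0, …, B_{ℓ−2}, C_0, …, C_{ℓ−1} such that for every n > ℓ·(k + δ − 2) one has L_{k,ℓ}(n) = A·2^n + Σ_{j=0}^{ℓ−2} B_j·binom(n+j, j) + (−1)^n·Σ_{j=0}^{ℓ−1} C_j·binom(n+j, j) (where the first sum is empty if ℓ = 1). -/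
/-- `Lcount k ℓ n` is the number of compositions of `n` with at least `ℓ` parts
whose first `ℓ` parts are not even integers greater than `k`. -/
def Lcount (k ℓ n : ℕ) : ℕ :=
  (Finset.univ.filter fun m : Composition n =>
    ℓ ≤ m.blocks.length ∧
      ∀ t < ℓ, ¬(Even (m.blocks.getD t 0) ∧ k < m.blocks.getD t 0)).card

open PowerSeries in
theorem aux_negpow (d : ℕ) :
    (PowerSeries.mk fun n => ((-1 : ℂ)) ^ n * ((n + d).choose d : ℂ)) * (1 + X) ^ (d + 1) = 1 := by
  have h := PowerSeries.mk_add_choose_mul_one_sub_pow_eq_one (S := ℂ) (d := d)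
  have h2 := congrArg (PowerSeries.rescale (-1 : ℂ)) h
  have hX : PowerSeries.rescale (-1 : ℂ) X = - X := by
    ext n
    rw [PowerSeries.coeff_rescale]
    by_cases hn : n = 1
    · subst hn; simp
    · simp [PowerSeries.coeff_X, hn]
  rw [map_mul, map_one, map_pow, map_sub, map_one, hX, sub_neg_eq_add] at h2
  refine Eq.trans ?_ h2
  congr 1
  ext n
  rw [PowerSeries.coeff_rescale]
  simp [add_comm]

open PowerSeries in
theorem aux_pospow (d : ℕ) :
    (PowerSeries.mk fun n => ((n + d).choose d : ℂ)) * (1 - X) ^ (d + 1) = 1 := by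
  have h := PowerSeries.mk_add_choose_mul_one_sub_pow_eq_one (S := ℂ) (d := d)
  refine Eq.trans ?_ h
  congr 1
  ext n
  simp [add_comm]

theorem aux_div (P D : Polynomial ℂ) (r : ℂ) (hr : D.eval r ≠ 0) :
    ∃ c : ℂ, ∃ Q : Polynomial ℂ, P - Polynomial.C c * D = (Polynomial.X - Polynomial.C r) * Q ∧
      Q.natDegree + 1 ≤ max (max P.natDegree D.natDegree) 1 := by
  refine ⟨P.eval r / D.eval r, ?_⟩
  have hroot : (P - Polynomial.C (P.eval r / D.eval r) * D).IsRoot r := by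
    simp [Polynomial.IsRoot, hr]
  obtain ⟨Q, hQ⟩ := Polynomial.dvd_iff_isRoot.mpr hroot
  refine ⟨Q, hQ, ?_⟩
  by_cases h0 : Q = 0
  · subst h0; simp
  have h1 : ((Polynomial.X - Polynomial.C r) * Q).natDegree = 1 + Q.natDegree := by
    rw [Polynomial.natDegree_mul (Polynomial.X_sub_C_ne_zero r) h0, Polynomial.natDegree_X_sub_C]
  rw [← hQ] at h1
  have h2 := Polynomial.natDegree_sub_le P (Polynomial.C (P.eval r / D.eval r) * D)
  have h3 := Polynomial.natDegree_C_mul_le (P.eval r / D.eval r) D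
  have h4 : max P.natDegree (Polynomial.C (P.eval r / D.eval r) * D).natDegree
    ≤ max P.natDegree D.natDegree := max_le_max le_rfl h3
  omega

theorem aux_D (a b : ℕ) : ((1 - Polynomial.X) ^ a * (1 + Polynomial.X) ^ b *
    (1 - Polynomial.C 2 * Polynomial.X) : Polynomial ℂ).natDegree ≤ a + b + 1 := by
  have h1 : (1 - Polynomial.X : Polynomial ℂ).natDegree ≤ 1 := by compute_degree
  have h2 : (1 + Polynomial.X : Polynomial ℂ).natDegree ≤ 1 := by compute_degree
  have h3 : (1 - Polynomial.C 2 * Polynomial.X : Polynomial ℂ).natDegree ≤ 1 := by compute_degree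
  refine Polynomial.natDegree_mul_le_of_le (Polynomial.natDegree_mul_le_of_le ?_ ?_) h3
  · simpa using Polynomial.natDegree_pow_le_of_le a h1
  · simpa using Polynomial.natDegree_pow_le_of_le b h2

def AuxGood (a b N : ℕ) (F : PowerSeries ℂ) : Prop :=
  ∃ A : ℂ, ∃ B : Fin a → ℂ, ∃ C : Fin b → ℂ, ∀ n : ℕ, N < n →
    PowerSeries.coeff n F = A * 2 ^ n + (∑ j : Fin a, B j * ((n + (j : ℕ)).choose (j : ℕ) : ℂ))
      + (-1) ^ n * ∑ j : Fin b, C j * ((n + (j : ℕ)).choose (j : ℕ) : ℂ)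

theorem aux_good0 (N : ℕ) (F : PowerSeries ℂ) (P : Polynomial ℂ) (hP : P.natDegree ≤ N + 1)
    (h : F * (1 - PowerSeries.C 2 * PowerSeries.X) = (P : PowerSeries ℂ)) : AuxGood 0 0 N F := by
  refine ⟨PowerSeries.coeff (N + 1) F / 2 ^ (N + 1), 0, 0, ?_⟩
  intro n hn
  obtain ⟨m, rfl⟩ := Nat.exists_eq_add_of_le (Nat.succ_le_of_lt hn)
  simp only [Finset.univ_eq_empty, Finset.sum_empty, mul_zero, add_zero]
  induction m with
  | zero => simp
  | succ m ih =>
    have ih := ih (by omega)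
    have h2 := congrArg (PowerSeries.coeff (N + 1 + m + 1)) h
    have h3 : F * (1 - PowerSeries.C 2 * PowerSeries.X)
      = F - PowerSeries.C 2 * (F * PowerSeries.X) := by ring
    rw [h3, Polynomial.coeff_coe, Polynomial.coeff_eq_zero_of_natDegree_lt (by omega), map_sub,
      PowerSeries.coeff_C_mul, PowerSeries.coeff_succ_mul_X] at h2
    have h4 : PowerSeries.coeff (N + 1 + m + 1) F = 2 * PowerSeries.coeff (N + 1 + m) F :=
      sub_eq_zero.mp h2
    change PowerSeries.coeff (N + 1 + m + 1) F = _ * 2 ^ (N + 1 + m + 1)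
    have ih' : PowerSeries.coeff (N + 1 + m) F = PowerSeries.coeff (N + 1) F / 2 ^ (N + 1) *
      2 ^ (N + 1 + m) := ih
    rw [h4, ih']
    ring

theorem aux_goodb (N b : ℕ) : ∀ (F : PowerSeries ℂ) (P : Polynomial ℂ),
    P.natDegree ≤ N + b + 1 →
    F * ((1 + PowerSeries.X) ^ b * (1 - PowerSeries.C 2 * PowerSeries.X)) = (P : PowerSeries ℂ) →
    AuxGood 0 b N F := by
  induction b with
  | zero =>
    intro F P hP h
    exact aux_good0 N F P hP (by simpa using h)
  | succ b ih =>
    intro F P hP h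
    obtain ⟨c, Q, hQ, hdeg⟩ := aux_div P
      ((1 - Polynomial.X) ^ 0 * (1 + Polynomial.X) ^ 0 *
        (1 - Polynomial.C 2 * Polynomial.X)) (-1) (by simp; norm_num)
    have hD := aux_D 0 0
    have hc := congrArg (fun p : Polynomial ℂ => (p : PowerSeries ℂ)) hQ
    simp only [pow_zero, one_mul] at hc
    push_cast at hc
    have hn := aux_negpow b
    set G := (PowerSeries.mk fun n => ((-1 : ℂ)) ^ n * ((n + b).choose b : ℂ)) with hG
    have hne : (1 + PowerSeries.X : PowerSeries ℂ) ≠ 0 := by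
      intro h0
      rw [pow_succ, h0] at hn
      simp at hn
    obtain ⟨A, B, C, hABC⟩ := ih (F - PowerSeries.C c * G) Q (by omega) (by
      apply mul_right_cancel₀ hne
      rw [← h] at hc
      simp only [map_neg, map_one, sub_neg_eq_add] at hc
      linear_combination hc - PowerSeries.C c * (1 - PowerSeries.C 2 * PowerSeries.X) * hn)
    refine ⟨A, B, Fin.snoc C c, fun n hn' => ?_⟩
    have := hABC n hn'
    rw [map_sub, PowerSeries.coeff_C_mul, hG, PowerSeries.coeff_mk, sub_eq_iff_eq_add] at this
    rw [this, Fin.sum_univ_castSucc]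
    simp
    ring

theorem aux_gooda (N b a : ℕ) : ∀ (F : PowerSeries ℂ) (P : Polynomial ℂ),
    P.natDegree ≤ N + a + b + 1 →
    F * ((1 - PowerSeries.X) ^ a * ((1 + PowerSeries.X) ^ b *
      (1 - PowerSeries.C 2 * PowerSeries.X))) = (P : PowerSeries ℂ) →
    AuxGood a b N F := by
  induction a with
  | zero =>
    intro F P hP h
    exact aux_goodb N b F P hP (by simpa using h)
  | succ a ih =>
    intro F P hP h
    obtain ⟨c, Q, hQ, hdeg⟩ := aux_div P
      ((1 - Polynomial.X) ^ 0 * (1 + Polynomial.X) ^ b *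
        (1 - Polynomial.C 2 * Polynomial.X)) 1 (by simp; norm_num)
    have hD := aux_D 0 b
    have hc := congrArg (fun p : Polynomial ℂ => (p : PowerSeries ℂ)) hQ
    simp only [pow_zero, one_mul] at hc
    push_cast at hc
    have hn := aux_pospow a
    set G := (PowerSeries.mk fun n => ((n + a).choose a : ℂ)) with hG
    have hne : (1 - PowerSeries.X : PowerSeries ℂ) ≠ 0 := by
      intro h0
      rw [pow_succ, h0] at hn
      simp at hn
    obtain ⟨A, B, C, hABC⟩ := ih (F - PowerSeries.C c * G) (-Q)
      (by rw [Polynomial.natDegree_neg]; omega) (by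
      apply mul_right_cancel₀ hne
      rw [← h] at hc
      push_cast
      simp only [map_one] at hc
      linear_combination hc - PowerSeries.C c * ((1 + PowerSeries.X) ^ b *
        (1 - PowerSeries.C 2 * PowerSeries.X)) * hn)
    refine ⟨A, Fin.snoc B c, C, fun n hn' => ?_⟩
    have := hABC n hn'
    rw [map_sub, PowerSeries.coeff_C_mul, hG, PowerSeries.coeff_mk, sub_eq_iff_eq_add] at this
    rw [this, Fin.sum_univ_castSucc]
    simp
    ring

theorem Lcount_zero' (k n : ℕ) : Lcount k 0 n = 2 ^ (n - 1) := by
  simp [Lcount, composition_card]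

theorem Lcount_succ' (k ℓ n : ℕ) : Lcount k (ℓ + 1) n =
    ∑ p ∈ Finset.HasAntidiagonal.antidiagonal n,
      (if p.1 ≠ 0 ∧ ¬ (Even p.1 ∧ k < p.1) then 1 else 0) * Lcount k ℓ p.2 := by
  classical
  unfold Lcount
  rw [Finset.card_eq_sum_card_fiberwise (t := Finset.HasAntidiagonal.antidiagonal n)
    (f := fun m : Composition n => (m.blocks.headD 0, m.blocks.tail.sum))]
  · refine Finset.sum_congr rfl ?_
    rintro ⟨p, q⟩ hpq
    rw [Finset.HasAntidiagonal.mem_antidiagonal] at hpq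
    simp only at hpq
    split_ifs with hp
    · rw [one_mul]
      symm
      refine Finset.card_bij (fun m _ => ⟨p :: m.blocks, ?_, ?_⟩) ?_ ?_ ?_
      · intro i hi
        rcases List.mem_cons.mp hi with rfl | hi
        · exact Nat.pos_of_ne_zero hp.1
        · exact m.blocks_pos hi
      · rw [List.sum_cons, m.blocks_sum, hpq]
      · intro m hm
        simp only [Finset.mem_filter, Finset.mem_univ, true_and] at hm ⊢
        refine ⟨⟨by simpa using hm.1, ?_⟩, by simp [m.blocks_sum]⟩
        intro t ht
        cases t with
        | zero => simpa using hp.2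
        | succ t => simpa using hm.2 t (by omega)
      · intro m1 _ m2 _ h
        have := congrArg Composition.blocks h
        simp only [List.cons.injEq, true_and] at this
        exact Composition.ext this
      · intro m hm
        simp only [Finset.mem_filter, Finset.mem_univ, true_and, Prod.mk.injEq] at hm
        obtain ⟨⟨h1, h2⟩, h3, h4⟩ := hm
        obtain ⟨bl, hpos, hsum⟩ := m
        cases bl with
        | nil => simp at h1
        | cons x xs =>
          simp only [List.headD_cons, List.tail_cons] at h3 h4
          subst h3
          refine ⟨⟨xs, fun hi => hpos (List.mem_cons_of_mem _ hi), h4⟩, ?_, rfl⟩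
          simp only [Finset.mem_filter, Finset.mem_univ, true_and]
          refine ⟨by simpa using h1, fun t ht => ?_⟩
          simpa using h2 (t + 1) (by omega)
    · rw [zero_mul, Finset.card_eq_zero, Finset.filter_eq_empty_iff]
      intro m hm heq
      simp only [Finset.mem_filter, Finset.mem_univ, true_and, Prod.mk.injEq] at hm heq
      obtain ⟨h1, h2⟩ := hm
      obtain ⟨h3, h4⟩ := heq
      apply hp
      obtain ⟨bl, hpos, hsum⟩ := m
      cases bl with
      | nil => simp at h1
      | cons x xs =>
        simp only [List.headD_cons, List.tail_cons] at h3 h4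
        subst h3
        refine ⟨(hpos List.mem_cons_self).ne', ?_⟩
        simpa using h2 0 (by omega)
  · intro m hm
    simp only [Finset.coe_filter, Finset.mem_univ, true_and, Set.mem_setOf_eq] at hm
    simp only [Finset.mem_coe, Finset.HasAntidiagonal.mem_antidiagonal]
    obtain ⟨bl, hpos, hsum⟩ := m
    cases bl with
    | nil => simp at hm
    | cons x xs => simpa using hsum

def auxf (k : ℕ) : PowerSeries ℂ :=
  PowerSeries.mk fun n => if n ≠ 0 ∧ ¬ (Even n ∧ k < n) then 1 else 0

def auxL (k ℓ : ℕ) : PowerSeries ℂ := PowerSeries.mk fun n => (Lcount k ℓ n : ℂ)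

theorem auxL_zero (k : ℕ) :
    auxL k 0 * (1 - PowerSeries.C 2 * PowerSeries.X) = 1 - PowerSeries.X := by
  have h3 : auxL k 0 * (1 - PowerSeries.C 2 * PowerSeries.X)
      = auxL k 0 - PowerSeries.C 2 * (auxL k 0 * PowerSeries.X) := by ring
  rw [h3]
  ext n
  rcases n with _ | _ | n
  · simp [auxL, Lcount_zero']
  · simp [auxL, Lcount_zero', PowerSeries.coeff_succ_mul_X, PowerSeries.coeff_one]
    norm_num
  · rw [map_sub, map_sub, PowerSeries.coeff_C_mul, PowerSeries.coeff_succ_mul_X]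
    simp [auxL, Lcount_zero', PowerSeries.coeff_one, PowerSeries.coeff_X]
    ring

theorem auxL_succ (k ℓ : ℕ) : auxL k (ℓ + 1) = auxf k * auxL k ℓ := by
  ext n
  rw [PowerSeries.coeff_mul]
  simp [auxL, auxf, Lcount_succ']

theorem auxf_mul (k h : ℕ) (hkh : k = 2 * h ∨ k = 2 * h + 1) :
    auxf k * (1 - PowerSeries.X ^ 2) =
      PowerSeries.X + PowerSeries.X ^ 2 - PowerSeries.X ^ (2 * h + 2) := by
  rw [mul_sub, mul_one]
  ext n
  rw [map_sub, PowerSeries.coeff_mul_X_pow', map_sub, map_add, PowerSeries.coeff_X,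
    PowerSeries.coeff_X_pow, PowerSeries.coeff_X_pow]
  simp only [auxf, PowerSeries.coeff_mk, Nat.even_iff]
  rcases n with _ | _ | n
  · simp
  · simp
  · simp only [show 2 ≤ n + 1 + 1 by omega, if_true, show n + 1 + 1 - 2 = n by omega]
    split_ifs <;> first | omega | norm_num

theorem auxL_mul (k h : ℕ) (hkh : k = 2 * h ∨ k = 2 * h + 1) (ℓ : ℕ) :
    auxL k ℓ * ((1 - PowerSeries.X ^ 2) ^ ℓ * (1 - PowerSeries.C 2 * PowerSeries.X)) =
      (PowerSeries.X + PowerSeries.X ^ 2 - PowerSeries.X ^ (2 * h + 2)) ^ ℓ *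
        (1 - PowerSeries.X) := by
  induction ℓ with
  | zero => simpa using auxL_zero k
  | succ ℓ ih =>
    rw [auxL_succ, pow_succ _ ℓ, pow_succ _ ℓ, ← auxf_mul k h hkh]
    rw [← auxf_mul k h hkh] at ih
    linear_combination (auxf k * (1 - PowerSeries.X ^ 2)) * ih

theorem stmt15 (k : ℕ) (hk : 1 ≤ k) (δ : ℕ) (hδ : δ = if Odd k then 1 else 2)
    (ℓ : ℕ) (hℓ : 1 ≤ ℓ) :
    ∃ A : ℂ, ∃ B : Fin (ℓ - 1) → ℂ, ∃ C : Fin ℓ → ℂ,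
      ∀ n : ℕ, ℓ * (k + δ - 2) < n →
        (Lcount k ℓ n : ℂ) =
          A * 2 ^ n
            + (∑ j : Fin (ℓ - 1), B j * ((n + (j : ℕ)).choose (j : ℕ) : ℂ))
            + (-1) ^ n * ∑ j : Fin ℓ, C j * ((n + (j : ℕ)).choose (j : ℕ) : ℂ) := by
  obtain ⟨h, hkh, hδh⟩ : ∃ h, (k = 2 * h ∨ k = 2 * h + 1) ∧ k + δ - 2 = 2 * h := by
    refine ⟨k / 2, by omega, ?_⟩
    simp only [Nat.odd_iff] at hδ
    split_ifs at hδ <;> omega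
  rw [hδh]
  obtain ⟨m, rfl⟩ : ∃ m, ℓ = m + 1 := ⟨ℓ - 1, by omega⟩
  have hmul := auxL_mul k h hkh (m + 1)
  have hne : (1 - PowerSeries.X : PowerSeries ℂ) ≠ 0 := by
    intro h0
    have := congrArg (PowerSeries.coeff 0) h0
    simp at this
  have key := aux_gooda ((m + 1) * (2 * h)) (m + 1) m (auxL k (m + 1))
    ((Polynomial.X + Polynomial.X ^ 2 - Polynomial.X ^ (2 * h + 2)) ^ (m + 1)) (by
      have h1 : (Polynomial.X + Polynomial.X ^ 2 - Polynomial.X ^ (2 * h + 2) :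
          Polynomial ℂ).natDegree ≤ 2 * h + 2 := by
        compute_degree
      have h2 := Polynomial.natDegree_pow_le_of_le (m + 1) h1
      refine h2.trans (le_of_eq ?_)
      ring) (by
      apply mul_right_cancel₀ hne
      push_cast
      rw [← hmul, show (1 - PowerSeries.X ^ 2 : PowerSeries ℂ)
        = (1 - PowerSeries.X) * (1 + PowerSeries.X) by ring, mul_pow]
      ring)
  obtain ⟨A, B, C, hABC⟩ := key
  refine ⟨A, B, C, fun n hn => ?_⟩
  have := hABC n hn
  simpa [auxL] using this
end
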